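/- arXiv:cmp-lg/9404001 — 2 statements merged into one kernel-verified Lean document; each statement's English description precedes it below -/
import Mathlib

section
/- Redundancy of adjacent sibling swapping (Proposition of the Appendix): Let σ be a type, E : List ℕ → Option σ a tree, and L₁, L₂ lists of triples (auxiliary tree, foot address, adjunction address). For any trees A, B : List ℕ → Option σ with foot addresses fA, fB and addresses t ≠ t', the simultaneous adjunction is unchanged by swapping the two adjacent entries: simul E (L₁ ++ (A, fA, t) :: (B, fB, t') :: L₂) = simul E (L₁ ++ (B, fB, t') :: (A, fA, t) :: L₂). -/
/-- Adjunction of an auxiliary tree `A` with foot address `f` at address `t` in tree `E`. -/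
def adjoin {σ : Type*} (E A : List ℕ → Option σ) (t f : List ℕ) : List ℕ → Option σ :=
  fun r =>
    if t <+: r then
      let u := r.drop t.length
      if f <+: u then E (t ++ u.drop f.length) else A u
    else E r

/-- Address update after adjunction of a tree with foot `f` at address `t`. -/
def update (s f t : List ℕ) : List ℕ :=
  if t <+: s ∧ t ≠ s then t ++ f ++ s.drop t.length else s

/-- Simultaneous adjunction of a list of (auxiliary tree, foot address, adjunction address). -/
def simul {σ : Type*} (E : List ℕ → Option σ) :
    List ((List ℕ → Option σ) × List ℕ × List ℕ) → (List ℕ → Option σ)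
  | [] => E
  | (A, f, t) :: L =>
      simul (adjoin E A t f) (L.map fun x => (x.1, x.2.1, update x.2.2 f t))
  termination_by L => L.length
  decreasing_by simp

/-!
Two distinct addresses are either nested or incomparable. If `t' = t ++ v` with `v ≠ []`, adjoining
at `t` first moves the second adjunction site to `t ++ fA ++ v`. Below the foot of `A` one then sees
the tree `E` adjoined at `v` relative to `t`, just as if the inner adjunction had come first. At
incomparable addresses the two adjunctions act on disjoint subtrees. In both cases the address
updates commute as well, so the two orders leave the same tree and the same remaining addresses.
Earlier entries of the list cannot make the two addresses collide, since each update is injective.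
-/

section Prefix

variable {α : Type*}

theorem not_prefix_append_of_incompRel {s t : List α} (h : IncompRel (· <+: ·) s t) (u : List α) :
    ¬ t <+: s ++ u := fun hts =>
  (List.prefix_or_prefix_of_prefix (List.prefix_append s u) hts).elim h.1 h.2

theorem exists_append_or_incompRel_of_ne {s t : List α} (h : s ≠ t) :
    (∃ v ≠ [], t = s ++ v) ∨ (∃ v ≠ [], s = t ++ v) ∨ IncompRel (· <+: ·) s t := by
  by_cases hst : s <+: t
  · obtain ⟨v, rfl⟩ := hst
    exact .inl ⟨v, by simpa using h, rfl⟩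
  by_cases hts : t <+: s
  · obtain ⟨v, rfl⟩ := hts
    exact .inr (.inl ⟨v, by simpa using h, rfl⟩)
  exact .inr (.inr ⟨hst, hts⟩)

end Prefix

section Update

variable {s t t' : List ℕ}

theorem update_of_not_prefix (f : List ℕ) (h : ¬ t <+: s) : update s f t = s :=
  if_neg fun hts => h hts.1

theorem update_of_prefix (f : List ℕ) (h : s <+: t) : update s f t = s :=
  if_neg fun hts => hts.2 (antisymm hts.1 h)

theorem update_append (f t : List ℕ) {v : List ℕ} (hv : v ≠ []) :
    update (t ++ v) f t = t ++ f ++ v := by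
  simp [update, hv]

theorem update_append_append (p s f t : List ℕ) :
    update (p ++ s) f (p ++ t) = p ++ update s f t := by
  by_cases h : t <+: s ∧ t ≠ s <;> simp [update, h]

theorem update_injective (f t : List ℕ) : Function.Injective fun s => update s f t := by
  -- The inverse erases `f`; at `s = t` it finds `f` there to erase only when `f = []`.
  suffices Function.LeftInverse (fun r => if t ++ f <+: r then t ++ r.drop (t ++ f).length else r)
      fun s => update s f t from this.injective
  intro s
  by_cases h : t <+: s
  · obtain ⟨v, rfl⟩ := h
    rcases eq_or_ne v [] with rfl | hv
    · simp +contextual [update_of_prefix]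
    · simp [update_append f t hv]
  · have hf : ¬ t ++ f <+: s := fun hs => h ((List.prefix_append t f).trans hs)
    simp [update_of_not_prefix f h, hf]

theorem update_ne_nil (f t : List ℕ) (hs : s ≠ []) : update s f t ≠ [] := by
  simpa [update_of_prefix f List.nil_prefix] using (update_injective f t).ne hs

theorem update_comm_of_append (s t v f g : List ℕ) :
    update (update s f t) g (t ++ f ++ v) = update (update s g (t ++ v)) f t := by
  by_cases h : t <+: s
  · obtain ⟨w, rfl⟩ := h
    rcases eq_or_ne w [] with rfl | hw
    · simp [update_of_prefix]
    · calc update (update (t ++ w) f t) g (t ++ f ++ v)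
        _ = t ++ f ++ update w g v := by rw [update_append f t hw, update_append_append]
        _ = update (t ++ update w g v) f t := (update_append f t (update_ne_nil g v hw)).symm
        _ = update (update (t ++ w) g (t ++ v)) f t := by rw [update_append_append]
  · have hp (x : List ℕ) : ¬ t ++ x <+: s := fun hx => h ((List.prefix_append t x).trans hx)
    rw [update_of_not_prefix f h, List.append_assoc, update_of_not_prefix g (hp _),
      update_of_not_prefix g (hp _), update_of_not_prefix f h]

theorem update_append_comm_of_incompRel (h : IncompRel (· <+: ·) t t') (v f g : List ℕ) :
    update (update (t ++ v) f t) g t' = update (update (t ++ v) g t') f t := by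
  have hv : update (t ++ v) f t = t ++ update v f [] := by
    simpa using update_append_append t v f []
  rw [update_of_not_prefix g (not_prefix_append_of_incompRel h v), hv,
    update_of_not_prefix g (not_prefix_append_of_incompRel h _)]

theorem update_comm_of_incompRel (h : IncompRel (· <+: ·) t t') (s f g : List ℕ) :
    update (update s f t) g t' = update (update s g t') f t := by
  by_cases hs : t <+: s
  · obtain ⟨v, rfl⟩ := hs
    exact update_append_comm_of_incompRel h v f g
  by_cases hs' : t' <+: s
  · obtain ⟨v, rfl⟩ := hs'
    exact (update_append_comm_of_incompRel h.symm v g f).symm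
  rw [update_of_not_prefix f hs, update_of_not_prefix g hs', update_of_not_prefix f hs]

theorem update_comm (h : t ≠ t') (s f g : List ℕ) :
    update (update s f t) g (update t' f t) = update (update s g t') f (update t g t') := by
  rcases exists_append_or_incompRel_of_ne h with ⟨v, hv, rfl⟩ | ⟨v, hv, rfl⟩ | h
  · rw [update_append f t hv, update_of_prefix g (List.prefix_append t v)]
    exact update_comm_of_append s t v f g
  · rw [update_append g t' hv, update_of_prefix f (List.prefix_append t' v)]
    exact (update_comm_of_append s t' v g f).symm
  · rw [update_of_not_prefix f h.1, update_of_not_prefix g h.2]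
    exact update_comm_of_incompRel h s f g

end Update

section Adjoin

variable {σ : Type*} (E A B : List ℕ → Option σ) {t t' : List ℕ}

theorem adjoin_of_not_prefix (f : List ℕ) {r : List ℕ} (h : ¬ t <+: r) :
    adjoin E A t f r = E r :=
  if_neg h

theorem adjoin_append_foot_append (t f w : List ℕ) :
    adjoin E A t f (t ++ f ++ w) = E (t ++ w) := by
  simp [adjoin]

theorem adjoin_append_of_not_prefix (t : List ℕ) {f u : List ℕ} (h : ¬ f <+: u) :
    adjoin E A t f (t ++ u) = A u := by
  simp [adjoin, h]

theorem adjoin_append_append (p t f u : List ℕ) :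
    adjoin E A (p ++ t) f (p ++ u) = adjoin (fun r => E (p ++ r)) A t f u := by
  simp [adjoin]

theorem adjoin_comm_of_append (t v f g : List ℕ) :
    adjoin (adjoin E A t f) B (t ++ f ++ v) g = adjoin (adjoin E B (t ++ v) g) A t f := by
  funext r
  by_cases ht : t <+: r
  · obtain ⟨u, rfl⟩ := ht
    by_cases hf : f <+: u
    · obtain ⟨w, rfl⟩ := hf
      rw [← List.append_assoc]
      calc adjoin (adjoin E A t f) B (t ++ f ++ v) g (t ++ f ++ w)
        _ = adjoin (fun x => E (t ++ x)) B v g w := by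
          simp only [adjoin_append_append, adjoin_append_foot_append]
        _ = adjoin E B (t ++ v) g (t ++ w) := (adjoin_append_append E B t v g w).symm
        _ = adjoin (adjoin E B (t ++ v) g) A t f (t ++ f ++ w) :=
          (adjoin_append_foot_append _ A t f w).symm
    · have hfv : ¬ t ++ f ++ v <+: t ++ u := by
        rw [List.append_assoc, List.prefix_append_right_inj]
        exact fun hu => hf ((List.prefix_append f v).trans hu)
      rw [adjoin_of_not_prefix _ B g hfv, adjoin_append_of_not_prefix E A t hf,
        adjoin_append_of_not_prefix _ A t hf]
  · have hp (x : List ℕ) : ¬ t ++ x <+: r := fun hx => ht ((List.prefix_append t x).trans hx)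
    rw [List.append_assoc, adjoin_of_not_prefix _ B g (hp _), adjoin_of_not_prefix E A f ht,
      adjoin_of_not_prefix _ A f ht, adjoin_of_not_prefix E B g (hp _)]

theorem adjoin_append_comm_of_incompRel (h : IncompRel (· <+: ·) t t') (u f g : List ℕ) :
    adjoin (adjoin E A t f) B t' g (t ++ u) = adjoin (adjoin E B t' g) A t f (t ++ u) := by
  have restrict_eq : (fun x => adjoin E B t' g (t ++ x)) = fun x => E (t ++ x) :=
    funext fun x => adjoin_of_not_prefix E B g (not_prefix_append_of_incompRel h x)
  have restrict_adjoin (D : List ℕ → Option σ) :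
      adjoin D A t f (t ++ u) = adjoin (fun x => D (t ++ x)) A [] f u := by
    simpa using adjoin_append_append D A t [] f u
  rw [adjoin_of_not_prefix _ B g (not_prefix_append_of_incompRel h u), restrict_adjoin,
    restrict_adjoin, restrict_eq]

theorem adjoin_comm_of_incompRel (h : IncompRel (· <+: ·) t t') (f g : List ℕ) :
    adjoin (adjoin E A t f) B t' g = adjoin (adjoin E B t' g) A t f := by
  funext r
  by_cases hr : t <+: r
  · obtain ⟨u, rfl⟩ := hr
    exact adjoin_append_comm_of_incompRel E A B h u f g
  by_cases hr' : t' <+: r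
  · obtain ⟨u, rfl⟩ := hr'
    exact (adjoin_append_comm_of_incompRel E B A h.symm u g f).symm
  rw [adjoin_of_not_prefix _ B g hr', adjoin_of_not_prefix E A f hr,
    adjoin_of_not_prefix _ A f hr, adjoin_of_not_prefix E B g hr']

theorem adjoin_comm (h : t ≠ t') (f g : List ℕ) :
    adjoin (adjoin E A t f) B (update t' f t) g
      = adjoin (adjoin E B t' g) A (update t g t') f := by
  rcases exists_append_or_incompRel_of_ne h with ⟨v, hv, rfl⟩ | ⟨v, hv, rfl⟩ | h
  · rw [update_append f t hv, update_of_prefix g (List.prefix_append t v)]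
    exact adjoin_comm_of_append E A B t v f g
  · rw [update_append g t' hv, update_of_prefix f (List.prefix_append t' v)]
    exact (adjoin_comm_of_append E B A t' v g f).symm
  · rw [update_of_not_prefix f h.1, update_of_not_prefix g h.2]
    exact adjoin_comm_of_incompRel E A B h f g

theorem simul_cons_cons_swap (h : t ≠ t') (f g : List ℕ)
    (L : List ((List ℕ → Option σ) × List ℕ × List ℕ)) :
    simul E ((A, f, t) :: (B, g, t') :: L) = simul E ((B, g, t') :: (A, f, t) :: L) := by
  simp only [simul, List.map_cons, List.map_map, Function.comp_def, adjoin_comm E A B h,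
    update_comm h]

end Adjoin

/-- Redundancy of adjacent sibling swapping (Proposition of the Appendix). -/
theorem simul_swap {σ : Type*} (E : List ℕ → Option σ)
    (L₁ L₂ : List ((List ℕ → Option σ) × List ℕ × List ℕ))
    (A B : List ℕ → Option σ) (fA fB t t' : List ℕ) (h : t ≠ t') :
    simul E (L₁ ++ (A, fA, t) :: (B, fB, t') :: L₂)
      = simul E (L₁ ++ (B, fB, t') :: (A, fA, t) :: L₂) := by
  induction E, L₁ using simul.induct generalizing L₂ t t' with
  | case1 E => exact simul_cons_cons_swap E A B h fA fB L₂
  | case2 E C f s L₁ ih =>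
    have h_update : update t f s ≠ update t' f s := (update_injective f s).ne h
    -- `simul.induct` presents the updated tail as a map over `L₁.attach`.
    simp only [List.map_attach_eq_pmap, List.pmap_eq_map] at ih
    simpa only [List.cons_append, simul, List.map_append, List.map_cons] using ih _ _ _ h_update
end

section
/- Adjunctions at nested addresses commute after address update (case t ≺ t' of the Lemma): Let σ be a type, E, A, B : List ℕ → Option σ trees with foot addresses fA, fB, and t, t' : List ℕ addresses such that t is a proper prefix of t'. Then adjoin (adjoin E A t fA) B (t ++ fA ++ t'.drop t.length) fB = adjoin (adjoin E B t' fB) A t fA. -/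
/-!
Adjunction is a composite of two subtree replacements: the subtree of `E` at `t` is put at the foot
of `A`, and the result is put back at `t`. By the laws of subtree replacement, for `t' = t ++ w`
both orders of adjunction then give `E` with its subtree at `t` replaced by the following tree: `A`
carrying at its foot the subtree of `E` at `t`, into which `B` has been adjoined at `w`.
-/

section SubtreeReplacement

variable {ι α : Type*}

/-- The subtree of `T` rooted at the address `t`, readdressed so that its root is `[]`. -/
def subtreeAt (T : List ι → α) (t : List ι) : List ι → α :=
  fun u => T (t ++ u)

theorem subtreeAt_append (T : List ι → α) (t w : List ι) :
    subtreeAt T (t ++ w) = subtreeAt (subtreeAt T t) w := by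
  funext u
  simp only [subtreeAt, List.append_assoc]

variable [DecidableEq ι]

/-- The replacement of the subtree of `T` rooted at the address `t` by `S`. It is defined for
arbitrary labelings, so `t` need not be a node of `T`. -/
def replaceAt (T : List ι → α) (t : List ι) (S : List ι → α) : List ι → α :=
  fun r => if t <+: r then S (r.drop t.length) else T r

theorem replaceAt_append (T S : List ι → α) (t u : List ι) : replaceAt T t S (t ++ u) = S u := by
  simp [replaceAt]

theorem replaceAt_of_not_prefix (T S : List ι → α) {t r : List ι} (h : ¬ t <+: r) :
    replaceAt T t S r = T r :=
  if_neg h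

theorem subtreeAt_replaceAt_self (T S : List ι → α) (t : List ι) :
    subtreeAt (replaceAt T t S) t = S :=
  funext (replaceAt_append T S t)

theorem subtreeAt_replaceAt_append (T S : List ι → α) (t w : List ι) :
    subtreeAt (replaceAt T (t ++ w) S) t = replaceAt (subtreeAt T t) w S := by
  funext u
  by_cases hwu : w <+: u
  · obtain ⟨v, rfl⟩ := hwu
    rw [subtreeAt, ← List.append_assoc, replaceAt_append, replaceAt_append]
  · have htwu : ¬ t ++ w <+: t ++ u := mt (List.prefix_append_right_inj t).mp hwu
    rw [subtreeAt, replaceAt_of_not_prefix _ _ htwu, replaceAt_of_not_prefix _ _ hwu, subtreeAt]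

theorem eq_replaceAt_of_subtreeAt_eq {T T' S : List ι → α} {t : List ι}
    (h_at : subtreeAt T' t = S) (h_off : ∀ r, ¬ t <+: r → T' r = T r) : T' = replaceAt T t S := by
  funext r
  by_cases htr : t <+: r
  · obtain ⟨u, rfl⟩ := htr
    rw [replaceAt_append, ← h_at, subtreeAt]
  · rw [replaceAt_of_not_prefix _ _ htr, h_off r htr]

theorem replaceAt_append_apply_of_not_prefix (T S : List ι → α) {t r : List ι} (w : List ι)
    (h : ¬ t <+: r) : replaceAt T (t ++ w) S r = T r :=
  replaceAt_of_not_prefix T S fun h' => h ((List.prefix_append t w).trans h')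

theorem replaceAt_replaceAt_below (T S S' : List ι → α) (t w : List ι) :
    replaceAt (replaceAt T t S) (t ++ w) S' = replaceAt T t (replaceAt S w S') := by
  apply eq_replaceAt_of_subtreeAt_eq
  · rw [subtreeAt_replaceAt_append, subtreeAt_replaceAt_self]
  · intro r htr
    rw [replaceAt_append_apply_of_not_prefix _ _ w htr, replaceAt_of_not_prefix _ _ htr]

theorem replaceAt_replaceAt_above (T S S' : List ι → α) (t w : List ι) :
    replaceAt (replaceAt T (t ++ w) S) t S' = replaceAt T t S' := by
  apply eq_replaceAt_of_subtreeAt_eq (subtreeAt_replaceAt_self _ _ _)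
  intro r htr
  rw [replaceAt_of_not_prefix _ _ htr, replaceAt_append_apply_of_not_prefix _ _ w htr]

end SubtreeReplacement

section Adjunction

variable {σ : Type*}

theorem adjoin_eq_replaceAt (E A : List ℕ → Option σ) (t f : List ℕ) :
    adjoin E A t f = replaceAt E t (replaceAt A f (subtreeAt E t)) :=
  rfl

theorem subtreeAt_adjoin_foot (E A : List ℕ → Option σ) (t f : List ℕ) :
    subtreeAt (adjoin E A t f) (t ++ f) = subtreeAt E t := by
  rw [adjoin_eq_replaceAt, subtreeAt_append, subtreeAt_replaceAt_self, subtreeAt_replaceAt_self]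

theorem subtreeAt_adjoin_append (E B : List ℕ → Option σ) (t w f : List ℕ) :
    subtreeAt (adjoin E B (t ++ w) f) t = adjoin (subtreeAt E t) B w f := by
  rw [adjoin_eq_replaceAt, adjoin_eq_replaceAt, subtreeAt_replaceAt_append, subtreeAt_append]

theorem adjoin_adjoin_below_foot (E A B : List ℕ → Option σ) (fA fB t w : List ℕ) :
    adjoin (adjoin E A t fA) B (t ++ fA ++ w) fB
      = replaceAt E t (replaceAt A fA (adjoin (subtreeAt E t) B w fB)) := by
  rw [adjoin_eq_replaceAt (adjoin E A t fA), subtreeAt_append, subtreeAt_adjoin_foot,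
    adjoin_eq_replaceAt E, List.append_assoc, replaceAt_replaceAt_below, replaceAt_replaceAt_below,
    ← adjoin_eq_replaceAt]

theorem adjoin_adjoin_above (E A B : List ℕ → Option σ) (fA fB t w : List ℕ) :
    adjoin (adjoin E B (t ++ w) fB) A t fA
      = replaceAt E t (replaceAt A fA (adjoin (subtreeAt E t) B w fB)) := by
  rw [adjoin_eq_replaceAt _ A, subtreeAt_adjoin_append, adjoin_eq_replaceAt E,
    replaceAt_replaceAt_above]

theorem adjoin_comm_nested_general (E A B : List ℕ → Option σ) (fA fB t w : List ℕ) :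
    adjoin (adjoin E A t fA) B (t ++ fA ++ w) fB
      = adjoin (adjoin E B (t ++ w) fB) A t fA :=
  (adjoin_adjoin_below_foot E A B fA fB t w).trans (adjoin_adjoin_above E A B fA fB t w).symm

end Adjunction

/-- Adjunctions at nested addresses commute after address update (case t ≺ t' of the Lemma). -/
theorem adjoin_comm_nested {σ : Type*} (E A B : List ℕ → Option σ)
    (fA fB t t' : List ℕ) (h1 : t <+: t') (h2 : t ≠ t') :
    adjoin (adjoin E A t fA) B (t ++ fA ++ t'.drop t.length) fB
      = adjoin (adjoin E B t' fB) A t fA := by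
  obtain ⟨w, rfl⟩ := h1
  rw [List.drop_left, adjoin_comm_nested_general]
end
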